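/- arXiv:1310.4618 — 2 statements merged into one kernel-verified Lean document; each statement's English description precedes it below -/
import Mathlib

section
/- Let n, k ≥ 1 and let R̂ ∈ S²_B(⋀²ℝⁿ) be an Einstein algebraic curvature operator with s(R̂) > 0 which is not a scalar multiple of id ∧ id, satisfying Q(R̂) = λR̂ for some λ > 0. Let E : S²_B(⋀²ℝⁿ) → S²_B(⋀²ℝ^{n+k}) denote extension by zero as a product curvature operator (E(S) agrees with S on ⋀²ℝⁿ and vanishes on e_i ∧ e_j whenever i or j exceeds n). Then for every α₀ ∈ (0,1) the curve R(t) = (α₀/(1 − λα₀t)) E(R̂_I) + (1/(1 − λt)) E(R̂_W), t ∈ [0, 1/λ), solves dR/dt = Q(R(t)) in S²_B(⋀²ℝ^{n+k}) with R(0) = E(α₀R̂_I + R̂_W), and R(t)/‖R(t)‖ converges to E(R̂_W)/‖R̂_W‖ as t → 1/λ. In particular the ODE dR/dt = Q(R) behaves unstably near the product curvature operator E(R̂). -/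
open scoped BigOperators
open Matrix Filter

noncomputable section

/-- `so n`: the Lie algebra of real skew-symmetric `n × n` matrices, as a submodule of
matrices.  It is the model for `⋀²ℝⁿ` under the identification `x ∧ y ↦ x yᵀ - y xᵀ`,
i.e. `(x ∧ y)(z) = ⟨y,z⟩x - ⟨x,z⟩y`. -/
def so (n : ℕ) : Submodule ℝ (Matrix (Fin n) (Fin n) ℝ) where
  carrier := {A | Aᵀ = -A}
  add_mem' := fun {a b} ha hb => by
    simp only [Set.mem_setOf_eq] at *
    rw [Matrix.transpose_add, ha, hb, neg_add]
  zero_mem' := by simp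
  smul_mem' := fun c {a} ha => by
    simp only [Set.mem_setOf_eq] at *
    rw [Matrix.transpose_smul, ha, smul_neg]

lemma mem_so {n : ℕ} {A : Matrix (Fin n) (Fin n) ℝ} : A ∈ so n ↔ Aᵀ = -A := Iff.rfl

lemma so_skew {n : ℕ} (X : so n) : (X.1)ᵀ = -X.1 := mem_so.mp X.2

lemma so_skew' {n : ℕ} (X : so n) (i j : Fin n) : X.1 j i = -X.1 i j := by
  have h := congrFun (congrFun (so_skew X) i) j
  simpa [Matrix.transpose_apply] using h

/-- The Lie bracket (matrix commutator) on `so n`. -/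
def brkt {n : ℕ} (X Y : so n) : so n :=
  ⟨X.1 * Y.1 - Y.1 * X.1, by
    rw [mem_so, Matrix.transpose_sub, Matrix.transpose_mul, Matrix.transpose_mul,
      so_skew X, so_skew Y]
    simp [neg_sub]⟩

/-- The inner product `⟨A, B⟩ = -(1/2) tr (A B)` on `so n ≅ ⋀²ℝⁿ`, for which
`{e_i ∧ e_j : i < j}` is orthonormal. -/
def ip {n : ℕ} (X Y : so n) : ℝ := -(1 / 2) * (X.1 * Y.1).trace

/-- `ip X` as a linear functional. -/
def ipL {n : ℕ} (X : so n) : so n →ₗ[ℝ] ℝ where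
  toFun Y := ip X Y
  map_add' Y Z := by
    simp [ip, Matrix.mul_add, Matrix.trace_add]
    ring
  map_smul' c Y := by
    simp [ip, Matrix.mul_smul, Matrix.trace_smul]
    ring

/-- The wedge `x ∧ y` of two vectors, as an element of `so n`. -/
def wedgeVec {n : ℕ} (x y : Fin n → ℝ) : so n :=
  ⟨Matrix.of fun i j => x i * y j - y i * x j, by
    rw [mem_so]
    ext i j
    simp [Matrix.transpose_apply]
    ring⟩

/-- Index set for the standard orthonormal basis `{e_i ∧ e_j : i < j}` of `so n`. -/
def pairs (n : ℕ) : Finset (Fin n × Fin n) := Finset.univ.filter (fun p => p.1 < p.2)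

/-- Standard basis vector of `ℝⁿ`. -/
def stdVec {n : ℕ} (i : Fin n) : Fin n → ℝ := Pi.single i 1

/-- The standard orthonormal basis element `e_i ∧ e_j` of `so n`. -/
def omegaB {n : ℕ} (p : Fin n × Fin n) : so n := wedgeVec (stdVec p.1) (stdVec p.2)

/-- Hamilton's sharp product `A # B` of self-adjoint endomorphisms of `⋀²ℝⁿ ≅ so n`:
`⟨(A # B)(φ), ψ⟩ = (1/2) Σ_{α,β} ⟨[A ω_α, B ω_β], φ⟩ ⟨[ω_α, ω_β], ψ⟩`
over the orthonormal basis `{ω_α} = {e_i ∧ e_j : i < j}`. -/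
def sharp {n : ℕ} (A B : Module.End ℝ (so n)) : Module.End ℝ (so n) :=
  (1 / 2 : ℝ) • ∑ p ∈ pairs n, ∑ q ∈ pairs n,
    (ipL (brkt (A (omegaB p)) (B (omegaB q)))).smulRight (brkt (omegaB p) (omegaB q))

/-- The bilinear map `Q(A,B) = (1/2)(AB + BA) + A # B`. -/
def Qbil {n : ℕ} (A B : Module.End ℝ (so n)) : Module.End ℝ (so n) :=
  (1 / 2 : ℝ) • (A * B + B * A) + sharp A B

/-- `Q(R) = R² + R # R`. -/
def Qop {n : ℕ} (R : Module.End ℝ (so n)) : Module.End ℝ (so n) := R * R + sharp R R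

/-- Self-adjointness of an endomorphism of `so n ≅ ⋀²ℝⁿ`. -/
def IsSelfAdjointCO {n : ℕ} (R : Module.End ℝ (so n)) : Prop :=
  ∀ X Y : so n, ip (R X) Y = ip X (R Y)

/-- The first Bianchi identity. -/
def SatBianchi {n : ℕ} (R : Module.End ℝ (so n)) : Prop :=
  ∀ x y z w : Fin n → ℝ,
    ip (R (wedgeVec x y)) (wedgeVec z w) + ip (R (wedgeVec y z)) (wedgeVec x w)
      + ip (R (wedgeVec z x)) (wedgeVec y w) = 0

/-- Algebraic curvature operators: self-adjoint endomorphisms of `⋀²ℝⁿ` satisfying the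
first Bianchi identity.  `IsACO R` says `R ∈ S²_B(⋀²ℝⁿ)`. -/
def IsACO {n : ℕ} (R : Module.End ℝ (so n)) : Prop := IsSelfAdjointCO R ∧ SatBianchi R

/-- The Ricci tensor of `R`, `Ric(R)_{ij} = Σ_k ⟨R(e_i ∧ e_k), e_j ∧ e_k⟩`. -/
def RicM {n : ℕ} (R : Module.End ℝ (so n)) : Matrix (Fin n) (Fin n) ℝ :=
  Matrix.of fun i j => ∑ k, ip (R (wedgeVec (stdVec i) (stdVec k))) (wedgeVec (stdVec j) (stdVec k))

/-- The scalar curvature `s(R) = tr Ric(R)`. -/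
def scal {n : ℕ} (R : Module.End ℝ (so n)) : ℝ := (RicM R).trace

/-- `‖Ric(R)‖² = tr (Ric(R)²)`. -/
def ricNormSq {n : ℕ} (R : Module.End ℝ (so n)) : ℝ := (RicM R * RicM R).trace

/-- The traceless Ricci tensor `Ric₀(R)`. -/
def Ric0M {n : ℕ} (R : Module.End ℝ (so n)) : Matrix (Fin n) (Fin n) ℝ :=
  RicM R - (scal R / n) • (1 : Matrix (Fin n) (Fin n) ℝ)

/-- `R` is Einstein if `Ric(R)` is a scalar multiple of the identity of `ℝⁿ`. -/
def IsEinstein {n : ℕ} (R : Module.End ℝ (so n)) : Prop :=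
  ∃ c : ℝ, RicM R = c • (1 : Matrix (Fin n) (Fin n) ℝ)

lemma wedgeEnd_key {n : ℕ} (A B : Matrix (Fin n) (Fin n) ℝ) (M : so n) :
    (A * M.1 * Bᵀ + B * M.1 * Aᵀ)ᵀ = -(A * M.1 * Bᵀ + B * M.1 * Aᵀ) := by
  have hM := so_skew M
  rw [Matrix.transpose_add, Matrix.transpose_mul, Matrix.transpose_mul,
    Matrix.transpose_mul, Matrix.transpose_mul, Matrix.transpose_transpose,
    Matrix.transpose_transpose, hM]
  simp only [Matrix.mul_neg, Matrix.neg_mul, Matrix.mul_assoc, neg_add]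
  abel

/-- The wedge `A ∧ B` of two endomorphisms of `ℝⁿ`, as an endomorphism of `⋀²ℝⁿ ≅ so n`:
`(A ∧ B)(v ∧ w) = (1/2)(Av ∧ Bw + Bv ∧ Aw)`, i.e. `M ↦ (1/2)(A M Bᵀ + B M Aᵀ)`. -/
def wedgeEnd {n : ℕ} (A B : Matrix (Fin n) (Fin n) ℝ) : Module.End ℝ (so n) where
  toFun M := ⟨(1 / 2 : ℝ) • (A * M.1 * Bᵀ + B * M.1 * Aᵀ), by
    rw [mem_so, Matrix.transpose_smul, wedgeEnd_key, smul_neg]⟩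
  map_add' M N := by
    apply Subtype.ext
    simp [Matrix.mul_add, Matrix.add_mul, smul_add]
    abel
  map_smul' c M := by
    apply Subtype.ext
    simp [Matrix.mul_smul, Matrix.smul_mul, smul_smul, mul_comm]

/-- Inner product `⟨A, B⟩ = tr(A ∘ B)` on endomorphisms of `⋀²ℝⁿ` (the Frobenius inner
product for self-adjoint operators). -/
def endIP {n : ℕ} (A B : Module.End ℝ (so n)) : ℝ := LinearMap.trace ℝ ↥(so n) (A * B)

/-- Norm of an endomorphism of `⋀²ℝⁿ` induced by `endIP`. -/
def endNorm {n : ℕ} (A : Module.End ℝ (so n)) : ℝ := Real.sqrt (endIP A A)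

/-- Huisken's trilinear form `tri(A,B,C) = tr((AB + BA + 2 A#B) ∘ C) = 2⟨Q(A,B), C⟩`. -/
def tri {n : ℕ} (A B C : Module.End ℝ (so n)) : ℝ :=
  LinearMap.trace ℝ ↥(so n) ((A * B + B * A + (2 : ℝ) • sharp A B) * C)

/-- The identity component `R_I = (s(R)/(n(n-1))) id ∧ id` of a curvature operator. -/
def compI {n : ℕ} (R : Module.End ℝ (so n)) : Module.End ℝ (so n) :=
  (scal R / ((n : ℝ) * ((n : ℝ) - 1))) • 1

/-- The traceless-Ricci component `R_{Ric₀} = (2/(n-2)) Ric₀(R) ∧ id`. -/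
def compRic0 {n : ℕ} (R : Module.End ℝ (so n)) : Module.End ℝ (so n) :=
  (2 / ((n : ℝ) - 2)) • wedgeEnd (Ric0M R) 1

/-- The Weyl component `R_W = R - R_I - R_{Ric₀}`. -/
def compW {n : ℕ} (R : Module.End ℝ (so n)) : Module.End ℝ (so n) := R - compI R - compRic0 R

/-- The derivative `DQ̃(R)` of the normalized vector field
`Q̃(R) = Q(R) - ‖Ric R‖² R` at `R`, applied to `A`:
`DQ̃(R)(A) = 2Q(R,A) - ‖Ric R‖² A - 2 tr(Ric R · Ric A) R`. -/
def DQt {n : ℕ} (R A : Module.End ℝ (so n)) : Module.End ℝ (so n) :=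
  (2 : ℝ) • Qbil R A - ricNormSq R • A - (2 * (RicM R * RicM A).trace) • R


/-- Extension of a vector of `ℝ^{n₁}` by zero to `ℝ^{n₁+n₂}`. -/
def inlV {n₁ n₂ : ℕ} (v : Fin n₁ → ℝ) : Fin (n₁ + n₂) → ℝ :=
  fun i => if h : (i : ℕ) < n₁ then v ⟨i, h⟩ else 0

/-- Extension of a vector of `ℝ^{n₂}` by zero to `ℝ^{n₁+n₂}` (into the second factor). -/
def inrV {n₁ n₂ : ℕ} (w : Fin n₂ → ℝ) : Fin (n₁ + n₂) → ℝ :=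
  fun i => if h : (i : ℕ) < n₁ then 0 else w ⟨(i : ℕ) - n₁, by omega⟩

lemma inrV_aux {n₁ n₂ : ℕ} (i : Fin (n₁ + n₂)) (h : ¬ (i : ℕ) < n₁) :
    (i : ℕ) - n₁ < n₂ := by omega

/-- Embedding `so n₁ → so (n₁ + n₂)` as the upper-left block. -/
def embSoL {n₁ n₂ : ℕ} (M : so n₁) : so (n₁ + n₂) :=
  ⟨Matrix.of fun i j =>
      if hi : (i : ℕ) < n₁ then
        (if hj : (j : ℕ) < n₁ then M.1 ⟨i, hi⟩ ⟨j, hj⟩ else 0)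
      else 0, by
    rw [mem_so]
    ext i j
    simp only [Matrix.transpose_apply, Matrix.of_apply, Matrix.neg_apply]
    by_cases hi : (i : ℕ) < n₁ <;> by_cases hj : (j : ℕ) < n₁ <;>
      simp [hi, hj]
    exact so_skew' M _ _⟩

/-- Embedding `so n₂ → so (n₁ + n₂)` as the lower-right block. -/
def embSoR {n₁ n₂ : ℕ} (M : so n₂) : so (n₁ + n₂) :=
  ⟨Matrix.of fun i j =>
      if hi : (i : ℕ) < n₁ then 0
      else if hj : (j : ℕ) < n₁ then 0
      else M.1 ⟨(i : ℕ) - n₁, inrV_aux i hi⟩ ⟨(j : ℕ) - n₁, inrV_aux j hj⟩, by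
    rw [mem_so]
    ext i j
    simp only [Matrix.transpose_apply, Matrix.of_apply, Matrix.neg_apply]
    by_cases hi : (i : ℕ) < n₁ <;> by_cases hj : (j : ℕ) < n₁ <;>
      simp [hi, hj]
    exact so_skew' M _ _⟩

/-- `R ∈ S²_B(⋀²ℝ^{n₁+n₂})` is the product curvature operator of `R₁` and `R₂`:
`R(v ∧ w) = R_i(v ∧ w)` for `v, w` in the `i`-th factor, and `R(v ∧ w) = 0` for
`v ∈ ℝ^{n₁}`, `w ∈ ℝ^{n₂}`. -/
def IsProductOf {n₁ n₂ : ℕ} (R : Module.End ℝ (so (n₁ + n₂)))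
    (R₁ : Module.End ℝ (so n₁)) (R₂ : Module.End ℝ (so n₂)) : Prop :=
  (∀ v w : Fin n₁ → ℝ,
     R (wedgeVec (inlV v) (inlV w)) = embSoL (R₁ (wedgeVec v w))) ∧
  (∀ v w : Fin n₂ → ℝ,
     R (wedgeVec (inrV v) (inrV w)) = embSoR (R₂ (wedgeVec v w))) ∧
  (∀ (v : Fin n₁ → ℝ) (w : Fin n₂ → ℝ),
     R (wedgeVec (inlV v) (inrV w)) = 0)

/-- Restriction of a skew matrix on `ℝ^{n+k}` to its upper-left `n × n` block. -/
def resSo {n k : ℕ} (M : so (n + k)) : so n :=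
  ⟨Matrix.of fun i j =>
      M.1 (Fin.castLE (Nat.le_add_right n k) i) (Fin.castLE (Nat.le_add_right n k) j), by
    rw [mem_so]
    ext i j
    simp only [Matrix.transpose_apply, Matrix.of_apply, Matrix.neg_apply]
    exact so_skew' M _ _⟩

lemma resSo_add {n k : ℕ} (M N : so (n + k)) : resSo (M + N) = resSo M + resSo N := by
  apply Subtype.ext
  ext i j
  simp [resSo]

lemma resSo_smul {n k : ℕ} (c : ℝ) (M : so (n + k)) : resSo (c • M) = c • resSo M := by
  apply Subtype.ext
  ext i j
  simp [resSo]

lemma embSoL_add {n₁ n₂ : ℕ} (M N : so n₁) :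
    (embSoL (M + N) : so (n₁ + n₂)) = embSoL M + embSoL N := by
  apply Subtype.ext
  ext i j
  simp only [embSoL, Matrix.of_apply, Submodule.coe_add, Matrix.add_apply]
  split_ifs <;> simp

lemma embSoL_smul {n₁ n₂ : ℕ} (c : ℝ) (M : so n₁) :
    (embSoL (c • M) : so (n₁ + n₂)) = c • embSoL M := by
  apply Subtype.ext
  ext i j
  simp only [embSoL, Matrix.of_apply, SetLike.val_smul, Matrix.smul_apply, smul_eq_mul]
  split_ifs <;> simp

/-- Extension by zero of a curvature operator on `⋀²ℝⁿ` to one on `⋀²ℝ^{n+k}`,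
making it the product curvature operator of `S` with the zero operator on `ℝᵏ`:
`E(S)` agrees with `S` on `⋀²ℝⁿ` and vanishes on `e_i ∧ e_j` whenever `i` or `j`
exceeds `n`. -/
def extEnd {n k : ℕ} (S : Module.End ℝ (so n)) : Module.End ℝ (so (n + k)) where
  toFun M := embSoL (S (resSo M))
  map_add' M N := by
    show embSoL (S (resSo (M + N))) = embSoL (S (resSo M)) + embSoL (S (resSo N))
    rw [resSo_add, map_add, embSoL_add]
  map_smul' c M := by
    show embSoL (S (resSo (c • M))) = c • embSoL (S (resSo M))
    rw [resSo_smul, LinearMap.map_smul, embSoL_smul]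

/-- The normalized-instability curve in the product space:
`t ↦ (α₀/(1-λα₀t)) E(R̂_I) + (1/(1-λt)) E(R̂_W)`. -/
def curveE {n k : ℕ} (RI RW : Module.End ℝ (so n)) (lam a t : ℝ) :
    Module.End ℝ (so (n + k)) :=
  (a / (1 - lam * a * t)) • extEnd RI + (1 / (1 - lam * t)) • extEnd RW


/-! For an Einstein operator write `R̂ = c • id + W` with `W` Ricci-flat. The first Bianchi
identity gives `R + R # id = Ric(R) ∧ id`; hence `Q(c • id + W) = (n - 1)c² • id + Q(W)` without a
cross term, and `tr Q(W) = tr W² - tr W² = 0`. Taking traces in `Q(R̂) = λR̂` therefore separates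
it into `Q(R̂_I) = λR̂_I` and `Q(R̂_W) = λR̂_W`. Extension by zero is induced by an isometric
embedding of Lie algebras, so it commutes with `Q`, and on the plane spanned by `E(R̂_I)` and
`E(R̂_W)` the flow decouples into two equations `dx/dt = λx²`. Since `α₀ < 1`, the coefficient of
`E(R̂_W)` blows up first and dominates. -/

section

variable {n k : ℕ}

/-! ### The inner product and the standard basis -/

lemma ipL_apply (X Y : so n) : ipL X Y = ip X Y := rfl

lemma ip_comm (X Y : so n) : ip X Y = ip Y X := by
  rw [ip, ip, trace_mul_comm]

lemma ip_add_left (X Y Z : so n) : ip (X + Y) Z = ip X Z + ip Y Z := by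
  simp only [ip_comm _ Z, ← ipL_apply, map_add]

lemma ip_sub_left (X Y Z : so n) : ip (X - Y) Z = ip X Z - ip Y Z := by
  simp only [ip_comm _ Z, ← ipL_apply, map_sub]

lemma ip_smul_left (c : ℝ) (X Y : so n) : ip (c • X) Y = c * ip X Y := by
  simp only [ip_comm _ Y, ← ipL_apply, map_smul, smul_eq_mul]

lemma ip_sum_left {ι : Type*} (s : Finset ι) (f : ι → so n) (Y : so n) :
    ip (∑ x ∈ s, f x) Y = ∑ x ∈ s, ip (f x) Y := by
  simp only [ip_comm _ Y, ← ipL_apply, map_sum]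

lemma ip_self (X : so n) : ip X X = 1 / 2 * (X.1ᴴ * X.1).trace := by
  rw [conjTranspose_eq_transpose_of_trivial, so_skew, Matrix.neg_mul, trace_neg, ip]
  ring

lemma ip_self_nonneg (X : so n) : 0 ≤ ip X X := by
  rw [ip_self]
  have := (posSemidef_conjTranspose_mul_self X.1).trace_nonneg
  positivity

lemma ip_self_eq_zero {X : so n} : ip X X = 0 ↔ X = 0 := by
  rw [ip_self, mul_eq_zero_iff_left (by norm_num), trace_conjTranspose_mul_self_eq_zero_iff,
    ZeroMemClass.coe_eq_zero]

lemma ip_wedgeVec (X : so n) (x y : Fin n → ℝ) : ip X (wedgeVec x y) = x ⬝ᵥ X.1 *ᵥ y := by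
  have h_wedge : (wedgeVec x y).1 = vecMulVec x y - vecMulVec y x := by
    ext i j
    simp [wedgeVec, vecMulVec_apply]
  have h_swap : X.1 *ᵥ x ⬝ᵥ y = -(x ⬝ᵥ X.1 *ᵥ y) := by
    rw [← vecMul_transpose, so_skew, ← dotProduct_mulVec, neg_mulVec, dotProduct_neg]
  rw [ip, h_wedge, Matrix.mul_sub, trace_sub, mul_vecMulVec, mul_vecMulVec, trace_vecMulVec,
    trace_vecMulVec, h_swap, dotProduct_comm (X.1 *ᵥ y)]
  ring

lemma ip_omegaB (X : so n) (i j : Fin n) : ip X (omegaB (i, j)) = X.1 i j := by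
  simp [omegaB, stdVec, ip_wedgeVec]

lemma ip_ext {X Y : so n} (h : ∀ Z, ip X Z = ip Y Z) : X = Y := by
  ext i j
  rw [← ip_omegaB, ← ip_omegaB, h]

lemma omegaB_apply (i j a b : Fin n) : (omegaB (i, j)).1 a b =
    (if a = i then 1 else 0) * (if b = j then 1 else 0)
      - (if a = j then 1 else 0) * (if b = i then 1 else 0) := by
  simp [omegaB, wedgeVec, stdVec, Pi.single_apply]

lemma omegaB_swap (i j : Fin n) : omegaB (j, i) = -omegaB (i, j) := by
  ext a b
  simp only [Submodule.coe_neg, Matrix.neg_apply, omegaB_apply]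
  ring

lemma omegaB_self (i : Fin n) : omegaB (i, i) = 0 := by
  ext a b
  simp only [Submodule.coe_zero, Matrix.zero_apply, omegaB_apply, sub_self]

lemma two_nsmul_sum_pairs {M : Type*} [AddCommMonoid M] {f : Fin n × Fin n → M}
    (h_symm : ∀ i j, f (j, i) = f (i, j)) (h_diag : ∀ i, f (i, i) = 0) :
    2 • ∑ p ∈ pairs n, f p = ∑ i, ∑ j, f (i, j) := by
  have h_lt : ∑ p ∈ pairs n, f p = ∑ i, ∑ j, if i < j then f (i, j) else 0 := by
    rw [pairs, Finset.sum_filter, Fintype.sum_prod_type]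
  have h_gt : ∑ p ∈ pairs n, f p = ∑ i, ∑ j, if j < i then f (i, j) else 0 := by
    rw [h_lt, Finset.sum_comm]
    simp only [h_symm]
  have h_split (i j : Fin n) :
      f (i, j) = (if i < j then f (i, j) else 0) + if j < i then f (i, j) else 0 := by
    rcases lt_trichotomy i j with h | rfl | h
    · simp [h, h.not_gt]
    · simp [h_diag]
    · simp [h, h.not_gt]
  calc 2 • ∑ p ∈ pairs n, f p
      = ∑ i, ∑ j, ((if i < j then f (i, j) else 0) + if j < i then f (i, j) else 0) := by
        rw [two_nsmul]
        nth_rw 1 [h_lt]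
        rw [h_gt]
        simp only [Finset.sum_add_distrib]
    _ = ∑ i, ∑ j, f (i, j) := by simp only [← h_split]

lemma so_sum_apply {ι : Type*} (s : Finset ι) (f : ι → so n) (a b : Fin n) :
    (∑ x ∈ s, f x).1 a b = ∑ x ∈ s, (f x).1 a b := by
  simp [Matrix.sum_apply]

lemma sum_sum_smul_omegaB (X : so n) : ∑ i, ∑ j, X.1 i j • omegaB (i, j) = (2 : ℝ) • X := by
  ext a b
  calc (∑ i, ∑ j, X.1 i j • omegaB (i, j)).1 a b
      = X.1 a b - X.1 b a := by
        simp [so_sum_apply, omegaB_apply, mul_sub, Finset.sum_sub_distrib]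
    _ = ((2 : ℝ) • X).1 a b := by
        rw [so_skew' X a b, two_smul, Submodule.coe_add, Matrix.add_apply, sub_neg_eq_add]

lemma sum_ip_smul_omegaB (X : so n) : ∑ p ∈ pairs n, ip X (omegaB p) • omegaB p = X := by
  refine smul_right_injective _ (two_ne_zero' ℝ) ?_
  beta_reduce
  rw [ofNat_smul_eq_nsmul, two_nsmul_sum_pairs, ← sum_sum_smul_omegaB]
  · simp only [ip_omegaB]
  · intro i j
    simp only [ip_omegaB]
    rw [omegaB_swap i j, so_skew' X i j, neg_smul_neg]
  · intro i
    rw [omegaB_self, smul_zero]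

lemma sum_sum_mul_map_omegaB_apply (A : Module.End ℝ (so n)) (φ : so n) (a b : Fin n) :
    ∑ i, ∑ j, φ.1 i j * (A (omegaB (i, j))).1 a b = 2 * (A φ).1 a b := by
  have := congrArg (fun X => (A X).1 a b) (sum_sum_smul_omegaB φ)
  simpa only [map_sum, map_smul, so_sum_apply, SetLike.val_smul, Matrix.smul_apply,
    smul_eq_mul] using this

lemma trace_eq_sum_ip (A : Module.End ℝ (so n)) :
    LinearMap.trace ℝ (so n) A = ∑ p ∈ pairs n, ip (A (omegaB p)) (omegaB p) := by
  have h_expand : A = ∑ p ∈ pairs n, (ipL (omegaB p)).smulRight (A (omegaB p)) := by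
    ext1 X
    conv_lhs => rw [← sum_ip_smul_omegaB X]
    simp only [map_sum, map_smul, LinearMap.sum_apply, LinearMap.smulRight_apply, ipL_apply,
      ip_comm X]
  conv_lhs => rw [h_expand]
  simp only [map_sum, LinearMap.trace_smulRight, ipL_apply, ip_comm (omegaB _)]

/-! ### The sharp product -/

/-- The Lie bracket of `so n` as a bilinear map, so that the `map_*` lemmas apply to it. -/
def brktL : so n →ₗ[ℝ] so n →ₗ[ℝ] so n :=
  LinearMap.mk₂ ℝ brkt
    (fun X Y Z => by
      ext1
      simp only [brkt, Submodule.coe_add, Matrix.add_mul, Matrix.mul_add]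
      abel)
    (fun c X Y => by ext1; simp [brkt, smul_sub])
    (fun X Y Z => by
      ext1
      simp only [brkt, Submodule.coe_add, Matrix.add_mul, Matrix.mul_add]
      abel)
    (fun c X Y => by ext1; simp [brkt, smul_sub])

lemma brktL_apply (X Y : so n) : brktL X Y = brkt X Y := rfl

lemma brkt_skew (X Y : so n) : brkt Y X = -brkt X Y := by
  ext1
  simp [brkt]

lemma brkt_val (X Y : so n) : (brkt X Y).1 = X.1 * Y.1 - (X.1 * Y.1)ᵀ := by
  simp [brkt, transpose_mul, so_skew]

lemma ip_brkt (X Y Z : so n) : ip (brkt X Y) Z = ip Y (brkt Z X) := by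
  simp only [ip, brkt, Matrix.sub_mul, Matrix.mul_sub, trace_sub]
  rw [Matrix.mul_assoc, trace_mul_comm X.1, Matrix.mul_assoc, Matrix.mul_assoc]

lemma sharp_apply (A B : Module.End ℝ (so n)) (φ : so n) :
    sharp A B φ = (1 / 2 : ℝ) • ∑ p ∈ pairs n, ∑ q ∈ pairs n,
      ip (brktL (A (omegaB p)) (B (omegaB q))) φ • brktL (omegaB p) (omegaB q) := by
  simp only [sharp, LinearMap.smul_apply, LinearMap.sum_apply, LinearMap.smulRight_apply,
    ipL_apply, brktL_apply]

lemma sharp_comm (A B : Module.End ℝ (so n)) : sharp A B = sharp B A := by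
  ext1 φ
  rw [sharp_apply, sharp_apply, Finset.sum_comm]
  congr! 3 with q - p -
  simp only [brktL_apply]
  rw [brkt_skew (B _), brkt_skew (omegaB q), ← neg_one_smul ℝ (brkt (B _) _), ip_smul_left,
    neg_one_mul, neg_smul_neg]

lemma sharp_add_left (A B C : Module.End ℝ (so n)) :
    sharp (A + B) C = sharp A C + sharp B C := by
  ext1 φ
  simp only [LinearMap.add_apply, sharp_apply, map_add, ip_add_left, add_smul,
    Finset.sum_add_distrib, smul_add]

lemma sharp_smul_left (c : ℝ) (A B : Module.End ℝ (so n)) :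
    sharp (c • A) B = c • sharp A B := by
  ext1 φ
  simp only [LinearMap.smul_apply, sharp_apply, map_smul, ip_smul_left, mul_smul, Finset.smul_sum,
    smul_comm c]

lemma sharp_add_right (A B C : Module.End ℝ (so n)) :
    sharp A (B + C) = sharp A B + sharp A C := by
  simp only [sharp_comm A, sharp_add_left]

lemma sharp_smul_right (c : ℝ) (A B : Module.End ℝ (so n)) :
    sharp A (c • B) = c • sharp A B := by
  simp only [sharp_comm A, sharp_smul_left]

lemma ip_sharp (A B : Module.End ℝ (so n)) (φ ψ : so n) :
    ip (sharp A B φ) ψ =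
      1 / 2 * ∑ p ∈ pairs n, ip (B (brktL ψ (omegaB p))) (brktL φ (A (omegaB p))) := by
  have h_inner (p : Fin n × Fin n) :
      ip (B (brktL ψ (omegaB p))) (brktL φ (A (omegaB p))) =
        ∑ q ∈ pairs n, ip (brktL (A (omegaB p)) (B (omegaB q))) φ *
          ip (brktL (omegaB p) (omegaB q)) ψ := by
    conv_lhs => rw [← sum_ip_smul_omegaB (brktL ψ (omegaB p))]
    simp only [map_sum, map_smul, ip_sum_left, ip_smul_left, brktL_apply, ip_brkt (omegaB p),
      ip_brkt (A _), ip_comm (omegaB _)]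
    exact Finset.sum_congr rfl fun _ _ => mul_comm _ _
  simp only [sharp_apply, ip_smul_left, ip_sum_left, h_inner]

lemma sharp_one_apply (A : Module.End ℝ (so n)) (φ : so n) :
    sharp A 1 φ = (1 / 2 : ℝ) • ∑ p ∈ pairs n, brktL (omegaB p) (brktL φ (A (omegaB p))) := by
  refine ip_ext fun ψ => ?_
  rw [ip_sharp, ip_smul_left, ip_sum_left]
  simp only [Module.End.one_apply, brktL_apply, ip_brkt (omegaB _), ip_comm (brkt ψ _)]

lemma trace_sharp (A B : Module.End ℝ (so n)) :
    LinearMap.trace ℝ (so n) (sharp A B) = LinearMap.trace ℝ (so n) (sharp A 1 * B) := by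
  rw [trace_eq_sum_ip (sharp A 1 * B), sharp_comm A B, sharp]
  simp only [map_smul, map_sum, LinearMap.trace_smulRight, ipL_apply, smul_eq_mul,
    Module.End.mul_apply, sharp_one_apply, ip_smul_left, ip_sum_left, brktL_apply, ip_brkt,
    ← Finset.mul_sum]

/-! ### The Bianchi identity and the Ricci tensor -/

lemma SatBianchi.sub {A B : Module.End ℝ (so n)} (hA : SatBianchi A) (hB : SatBianchi B) :
    SatBianchi (A - B) := by
  intro x y z w
  simp only [LinearMap.sub_apply, ip_sub_left]
  linear_combination hA x y z w - hB x y z w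

lemma SatBianchi.smul {A : Module.End ℝ (so n)} (hA : SatBianchi A) (c : ℝ) :
    SatBianchi (c • A) := by
  intro x y z w
  simp only [LinearMap.smul_apply, ip_smul_left]
  linear_combination c * hA x y z w

lemma satBianchi_one : SatBianchi (1 : Module.End ℝ (so n)) := by
  have ip_wedgeVec_wedgeVec (x y z w : Fin n → ℝ) : ip (wedgeVec x y) (wedgeVec z w) =
      (x ⬝ᵥ z) * (y ⬝ᵥ w) - (y ⬝ᵥ z) * (x ⬝ᵥ w) := by
    have h_mulVec : (wedgeVec x y).1 *ᵥ w = (y ⬝ᵥ w) • x - (x ⬝ᵥ w) • y := by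
      ext i
      simp only [wedgeVec, mulVec, dotProduct, of_apply, sub_mul, Finset.sum_sub_distrib,
        Pi.sub_apply, Pi.smul_apply, smul_eq_mul, Finset.sum_mul]
      congr! 2 <;> ring
    rw [ip_wedgeVec, h_mulVec, dotProduct_sub, dotProduct_smul, dotProduct_smul, smul_eq_mul,
      smul_eq_mul, dotProduct_comm z, dotProduct_comm z]
    ring
  intro x y z w
  simp only [Module.End.one_apply, ip_wedgeVec_wedgeVec]
  rw [dotProduct_comm y x, dotProduct_comm z x, dotProduct_comm z y]
  ring

lemma RicM_apply (A : Module.End ℝ (so n)) (i j : Fin n) :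
    RicM A i j = ∑ l, (A (omegaB (i, l))).1 j l := by
  simp only [← ip_omegaB]
  rfl

lemma RicM_sub (A B : Module.End ℝ (so n)) : RicM (A - B) = RicM A - RicM B := by
  ext i j
  simp [RicM_apply]

lemma RicM_smul (c : ℝ) (A : Module.End ℝ (so n)) : RicM (c • A) = c • RicM A := by
  ext i j
  simp [RicM_apply, Finset.mul_sum]

lemma RicM_one : RicM (1 : Module.End ℝ (so n)) = ((n : ℝ) - 1) • 1 := by
  ext i j
  rcases eq_or_ne i j with rfl | h
  · simp [RicM_apply, omegaB_apply]
  · simp [RicM_apply, omegaB_apply, h, h.symm]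

lemma scal_eq_two_mul_trace (A : Module.End ℝ (so n)) :
    scal A = 2 * LinearMap.trace ℝ (so n) A := by
  rw [trace_eq_sum_ip, two_mul, ← two_nsmul, two_nsmul_sum_pairs]
  · rfl
  · intro i j
    rw [ip_omegaB, ip_omegaB, omegaB_swap i j, map_neg, Submodule.coe_neg, Matrix.neg_apply,
      so_skew' _ i j, neg_neg]
  · intro i
    rw [omegaB_self, map_zero, ← ipL_apply, map_zero]

lemma trace_eq_zero_of_RicM_eq_zero {W : Module.End ℝ (so n)} (hW : RicM W = 0) :
    LinearMap.trace ℝ (so n) W = 0 := by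
  have h_scal : scal W = 0 := by rw [scal, hW, trace_zero]
  linarith [scal_eq_two_mul_trace W]

lemma sum_omegaB_mul_apply (M : Module.End ℝ (so n)) (a b : Fin n) :
    (∑ p ∈ pairs n, (omegaB p).1 * (M (omegaB p)).1) a b = ∑ j, (M (omegaB (a, j))).1 j b := by
  have h_entry (i j : Fin n) : ((omegaB (i, j)).1 * (M (omegaB (i, j))).1) a b =
      (if a = i then (M (omegaB (a, j))).1 j b else 0) +
        if a = j then (M (omegaB (a, i))).1 i b else 0 := by
    simp only [Matrix.mul_apply, omegaB_apply, sub_mul, Finset.sum_sub_distrib,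
      ite_mul, one_mul, zero_mul]
    split_ifs with h_i h_j h_j
    · simp [h_i, ← h_j, omegaB_self]
    · simp [h_i]
    · simp [h_j, omegaB_swap i j]
    · simp
  have h_twice : 2 • ∑ p ∈ pairs n, ((omegaB p).1 * (M (omegaB p)).1) a b =
      2 • ∑ j, (M (omegaB (a, j))).1 j b := by
    rw [two_nsmul_sum_pairs]
    · simp [h_entry, Finset.sum_add_distrib, two_mul]
    · intro i j
      simp [omegaB_swap i j]
    · intro i
      simp [omegaB_self]
  rw [Matrix.sum_apply]
  exact nsmul_right_injective two_ne_zero h_twice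

lemma SatBianchi.sum_sum_mul_omegaB_apply {A : Module.End ℝ (so n)} (hA : SatBianchi A) (φ : so n)
    (a b : Fin n) :
    ∑ j, ∑ c, φ.1 j c * (A (omegaB (a, j))).1 c b = -(A φ).1 a b := by
  have h_bianchi (j c : Fin n) : (A (omegaB (a, j))).1 c b + (A (omegaB (j, c))).1 a b
      - (A (omegaB (a, c))).1 j b = 0 := by
    have h := hA (stdVec a) (stdVec j) (stdVec c) (stdVec b)
    change ip (A (omegaB (a, j))) (omegaB (c, b)) + ip (A (omegaB (j, c))) (omegaB (a, b))
      + ip (A (omegaB (c, a))) (omegaB (j, b)) = 0 at h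
    rw [omegaB_swap a c, map_neg] at h
    simpa only [ip_omegaB, Submodule.coe_neg, Matrix.neg_apply, ← sub_eq_add_neg] using h
  have h_swap : ∑ j, ∑ c, φ.1 j c * (A (omegaB (a, c))).1 j b =
      -∑ j, ∑ c, φ.1 j c * (A (omegaB (a, j))).1 c b := by
    rw [Finset.sum_comm]
    simp only [← Finset.sum_neg_distrib, ← neg_mul, ← so_skew' φ]
  have h_sum : ∑ j, ∑ c, φ.1 j c * ((A (omegaB (a, j))).1 c b + (A (omegaB (j, c))).1 a b
      - (A (omegaB (a, c))).1 j b) = 0 := by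
    simp only [h_bianchi, mul_zero, Finset.sum_const_zero]
  simp only [mul_add, mul_sub, Finset.sum_add_distrib, Finset.sum_sub_distrib, h_swap,
    sum_sum_mul_map_omegaB_apply] at h_sum
  linarith

lemma SatBianchi.sum_omegaB_mul_brktL {A : Module.End ℝ (so n)} (hA : SatBianchi A) (φ : so n) :
    ∑ p ∈ pairs n, (omegaB p).1 * (brktL φ (A (omegaB p))).1 = RicM A * φ.1 - (A φ).1 := by
  ext a b
  have h_ric (c : Fin n) : ∑ j, (A (omegaB (a, j))).1 j c = -RicM A a c := by
    rw [RicM_apply, ← Finset.sum_neg_distrib]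
    exact Finset.sum_congr rfl fun j _ => so_skew' _ c j
  calc (∑ p ∈ pairs n, (omegaB p).1 * (brktL φ (A (omegaB p))).1) a b
      = ∑ j, (brktL φ (A (omegaB (a, j)))).1 j b := sum_omegaB_mul_apply (brktL φ ∘ₗ A) a b
    _ = ∑ j, ∑ c, φ.1 j c * (A (omegaB (a, j))).1 c b
          - ∑ c, (∑ j, (A (omegaB (a, j))).1 j c) * φ.1 c b := by
        simp only [brktL_apply, brkt, Matrix.sub_apply, Matrix.mul_apply, Finset.sum_sub_distrib,
          Finset.sum_mul]
        rw [Finset.sum_comm (f := fun j c => (A (omegaB (a, j))).1 j c * φ.1 c b)]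
    _ = (RicM A * φ.1 - (A φ).1) a b := by
        simp only [hA.sum_sum_mul_omegaB_apply, h_ric, Matrix.sub_apply, Matrix.mul_apply, neg_mul,
          Finset.sum_neg_distrib]
        ring

lemma SatBianchi.add_sharp_one {A : Module.End ℝ (so n)} (hA : SatBianchi A) :
    A + sharp A 1 = wedgeEnd (RicM A) 1 := by
  ext1 φ
  ext1
  have h_brkt (p : Fin n × Fin n) : (brktL (omegaB p) (brktL φ (A (omegaB p)))).1 =
      (omegaB p).1 * (brktL φ (A (omegaB p))).1
        - ((omegaB p).1 * (brktL φ (A (omegaB p))).1)ᵀ := brkt_val _ _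
  have h_sharp : (sharp A 1 φ).1 = (1 / 2 : ℝ) • ((RicM A * φ.1 - (A φ).1)
      - (RicM A * φ.1 - (A φ).1)ᵀ) := by
    rw [sharp_one_apply, ← hA.sum_omegaB_mul_brktL, transpose_sum, ← Finset.sum_sub_distrib]
    simp only [SetLike.val_smul, Submodule.coe_sum, h_brkt]
  rw [transpose_sub, transpose_mul, so_skew, so_skew] at h_sharp
  simp only [LinearMap.add_apply, Submodule.coe_add, h_sharp, wedgeEnd, LinearMap.coe_mk,
    AddHom.coe_mk, transpose_one, Matrix.mul_one, Matrix.one_mul, Matrix.neg_mul]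
  module

lemma wedgeEnd_smul_one_one (c : ℝ) :
    wedgeEnd (c • (1 : Matrix (Fin n) (Fin n) ℝ)) 1 = c • 1 := by
  ext1 φ
  ext1
  simp only [wedgeEnd, LinearMap.coe_mk, AddHom.coe_mk, transpose_smul, transpose_one,
    Matrix.smul_mul, Matrix.mul_smul, Matrix.mul_one, Matrix.one_mul, LinearMap.smul_apply,
    Module.End.one_apply, SetLike.val_smul]
  module

lemma wedgeEnd_zero_one : wedgeEnd (0 : Matrix (Fin n) (Fin n) ℝ) 1 = 0 := by
  simpa only [zero_smul] using wedgeEnd_smul_one_one (n := n) 0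

/-! ### The quadratic vector field `Q` -/

lemma Qop_smul (c : ℝ) (A : Module.End ℝ (so n)) : Qop (c • A) = c ^ 2 • Qop A := by
  simp only [Qop, smul_mul_smul_comm, sharp_smul_left, sharp_smul_right, smul_smul, smul_add, sq]

lemma Qop_add (A B : Module.End ℝ (so n)) :
    Qop (A + B) = Qop A + (2 : ℝ) • Qbil A B + Qop B := by
  simp only [Qop, Qbil, sharp_add_left, sharp_add_right, sharp_comm B A, mul_add, add_mul]
  module

lemma Qbil_smul_left (c : ℝ) (A B : Module.End ℝ (so n)) : Qbil (c • A) B = c • Qbil A B := by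
  simp only [Qbil, smul_mul_assoc, mul_smul_comm, sharp_smul_left]
  module

lemma Qbil_one_left {A : Module.End ℝ (so n)} (hA : SatBianchi A) :
    Qbil 1 A = wedgeEnd (RicM A) 1 := by
  rw [← hA.add_sharp_one, Qbil, sharp_comm, one_mul, mul_one]
  module

lemma Qop_one : Qop (1 : Module.End ℝ (so n)) = ((n : ℝ) - 1) • 1 := by
  rw [Qop, mul_one, satBianchi_one.add_sharp_one, RicM_one, wedgeEnd_smul_one_one]

lemma Qop_smul_one_add {W : Module.End ℝ (so n)} (hW : SatBianchi W) (hRic : RicM W = 0)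
    (c : ℝ) : Qop (c • 1 + W) = Qop (c • 1 : Module.End ℝ (so n)) + Qop W := by
  rw [Qop_add, Qbil_smul_left, Qbil_one_left hW, hRic, wedgeEnd_zero_one, smul_zero, smul_zero,
    add_zero]

lemma trace_Qop_eq_zero {W : Module.End ℝ (so n)} (hW : SatBianchi W) (hRic : RicM W = 0) :
    LinearMap.trace ℝ (so n) (Qop W) = 0 := by
  have h_sharp : W + sharp W 1 = 0 := by
    rw [hW.add_sharp_one, hRic, wedgeEnd_zero_one]
  rw [Qop, map_add, trace_sharp, ← map_add, ← add_mul, h_sharp, zero_mul, map_zero]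

lemma Qop_eq_smul_of_Qop_smul_one_add_eq {W : Module.End ℝ (so n)} (hW : SatBianchi W)
    (hRic : RicM W = 0) {c lam : ℝ} (hQ : Qop (c • 1 + W) = lam • (c • 1 + W)) :
    Qop (c • 1 : Module.End ℝ (so n)) = lam • (c • 1) ∧ Qop W = lam • W := by
  have h_Qop : Qop (c • 1 : Module.End ℝ (so n)) = (c ^ 2 * ((n : ℝ) - 1)) • 1 := by
    rw [Qop_smul, Qop_one, smul_smul]
  rw [Qop_smul_one_add hW hRic, smul_add] at hQ
  have h_one : Qop (c • 1 : Module.End ℝ (so n)) = lam • (c • 1) := by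
    have h_trace := congrArg (LinearMap.trace ℝ (so n)) hQ
    simp only [h_Qop, map_add, map_smul, trace_Qop_eq_zero hW hRic,
      trace_eq_zero_of_RicM_eq_zero hRic, LinearMap.trace_one, smul_eq_mul, ← mul_assoc, mul_zero,
      add_zero, mul_eq_mul_right_iff, Nat.cast_eq_zero] at h_trace
    rcases h_trace with h_coeff | h_dim
    · rw [h_Qop, h_coeff, smul_smul]
    · have := Module.finrank_zero_iff.mp h_dim
      exact Subsingleton.elim _ _
  refine ⟨h_one, ?_⟩
  rw [h_one] at hQ
  ext1 φ
  exact add_left_cancel (LinearMap.congr_fun hQ φ)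

/-! ### Einstein operators -/

lemma subsingleton_so (hn : n ≤ 1) : Subsingleton (so n) := by
  have := Fin.subsingleton_iff_le_one.mpr hn
  refine ⟨fun X Y => ?_⟩
  ext i j
  obtain rfl := Subsingleton.elim i j
  have h_diag (Z : so n) : Z.1 i i = 0 := by linarith [so_skew' Z i i]
  rw [h_diag, h_diag]

lemma IsEinstein.Ric0M_eq_zero {R : Module.End ℝ (so n)} (hR : IsEinstein R) : Ric0M R = 0 := by
  obtain ⟨r, hr⟩ := hR
  rcases eq_or_ne n 0 with rfl | hn
  · exact Subsingleton.elim _ _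
  · rw [Ric0M, scal, hr, trace_smul, trace_one, Fintype.card_fin, smul_eq_mul,
      mul_div_cancel_right₀ _ (Nat.cast_ne_zero.mpr hn), sub_self]

lemma IsEinstein.compW_eq {R : Module.End ℝ (so n)} (hR : IsEinstein R) :
    compW R = R - compI R := by
  ext1 φ
  rw [compW, compRic0, hR.Ric0M_eq_zero, wedgeEnd_zero_one, smul_zero, LinearMap.sub_apply,
    LinearMap.zero_apply, sub_zero]

lemma IsEinstein.compI_add_compW {R : Module.End ℝ (so n)} (hR : IsEinstein R) :
    compI R + compW R = R := by
  ext1 φ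
  rw [hR.compW_eq, LinearMap.add_apply, LinearMap.sub_apply, add_sub_cancel]

lemma IsEinstein.RicM_compW {R : Module.End ℝ (so n)} (hR : IsEinstein R) :
    RicM (compW R) = 0 := by
  rcases le_or_gt n 1 with hn | hn
  · have := subsingleton_so hn
    rw [Subsingleton.elim (compW R) ((0 : ℝ) • 1), RicM_smul, zero_smul]
  · rw [hR.compW_eq, RicM_sub, compI, RicM_smul, RicM_one, scal]
    obtain ⟨r, hr⟩ := hR
    have h_zero : (n : ℝ) ≠ 0 := by positivity
    have h_one : (n : ℝ) - 1 ≠ 0 := sub_ne_zero.mpr (by exact_mod_cast hn.ne')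
    rw [hr, trace_smul, trace_one, Fintype.card_fin, smul_eq_mul, smul_smul, ← sub_smul]
    have h_coeff : r - r * n / (n * (n - 1)) * (n - 1) = 0 := by
      field_simp
      ring
    rw [h_coeff, zero_smul]

lemma SatBianchi.compW {R : Module.End ℝ (so n)} (hB : SatBianchi R) (hR : IsEinstein R) :
    SatBianchi (compW R) :=
  hR.compW_eq ▸ hB.sub (satBianchi_one.smul _)

lemma IsSelfAdjointCO.compW {R : Module.End ℝ (so n)} (hS : IsSelfAdjointCO R)
    (hR : IsEinstein R) : IsSelfAdjointCO (compW R) := by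
  intro X Y
  simp only [hR.compW_eq, compI, LinearMap.sub_apply, LinearMap.smul_apply, Module.End.one_apply]
  rw [ip_sub_left, ip_smul_left, hS, ip_comm X (_ - _), ip_sub_left, ip_smul_left, ip_comm X,
    ip_comm X]

lemma Qop_smul_compI_add_smul_compW {R : Module.End ℝ (so n)} (hB : SatBianchi R)
    (hR : IsEinstein R) {lam : ℝ} (hQ : Qop R = lam • R) (x y : ℝ) :
    Qop (x • compI R + y • compW R) = (lam * x ^ 2) • compI R + (lam * y ^ 2) • compW R := by
  have h_bianchi := hB.compW hR
  have h_ric := hR.RicM_compW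
  have h_sum : Qop (compI R + compW R) = lam • (compI R + compW R) := by
    rwa [hR.compI_add_compW]
  obtain ⟨h_I, h_W⟩ : Qop (compI R) = lam • compI R ∧ Qop (compW R) = lam • compW R :=
    Qop_eq_smul_of_Qop_smul_one_add_eq h_bianchi h_ric h_sum
  have h_split : Qop (x • compI R + y • compW R) = Qop (x • compI R) + Qop (y • compW R) := by
    rw [compI, smul_smul]
    refine Qop_smul_one_add (h_bianchi.smul y) ?_ _
    rw [RicM_smul, h_ric, smul_zero]
  rw [h_split, Qop_smul, Qop_smul, h_I, h_W, smul_smul, smul_smul, mul_comm lam, mul_comm lam]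

/-! ### The norm on operators -/

lemma endNorm_pos {A : Module.End ℝ (so n)} (hA : IsSelfAdjointCO A) (h_ne : A ≠ 0) :
    0 < endNorm A := by
  have h_sum : endIP A A = ∑ p ∈ pairs n, ip (A (omegaB p)) (A (omegaB p)) := by
    rw [endIP, trace_eq_sum_ip]
    exact Finset.sum_congr rfl fun p _ => hA _ _
  rw [endNorm, Real.sqrt_pos, h_sum]
  refine (Finset.sum_nonneg fun p _ => ip_self_nonneg _).lt_of_ne' fun h_zero => h_ne ?_
  rw [Finset.sum_eq_zero_iff_of_nonneg fun p _ => ip_self_nonneg _] at h_zero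
  ext1 X
  rw [← sum_ip_smul_omegaB X, map_sum]
  refine Finset.sum_eq_zero fun p hp => ?_
  rw [map_smul, ip_self_eq_zero.mp (h_zero p hp), smul_zero]

lemma endNorm_smul (c : ℝ) (A : Module.End ℝ (so n)) : endNorm (c • A) = |c| * endNorm A := by
  rw [endNorm, endNorm, endIP, endIP, smul_mul_smul_comm, map_smul, smul_eq_mul,
    Real.sqrt_mul (mul_self_nonneg c), Real.sqrt_mul_self_eq_abs]

lemma inv_endNorm_mul_smul {c : ℝ} (hc : 0 < c) (A : Module.End ℝ (so n))
    (ℓ : Module.End ℝ (so n) →ₗ[ℝ] ℝ) :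
    (endNorm (c • A))⁻¹ * ℓ (c • A) = (endNorm A)⁻¹ * ℓ A := by
  rw [endNorm_smul, abs_of_pos hc, map_smul, smul_eq_mul, mul_inv]
  field_simp

lemma continuous_endNorm_smul_add (A B : Module.End ℝ (so n)) :
    Continuous fun x : ℝ => endNorm (x • A + B) := by
  simp only [endNorm, endIP, mul_add, add_mul, smul_mul_assoc, mul_smul_comm, map_add, map_smul,
    smul_eq_mul]
  fun_prop

/-! ### Extension by zero -/

/-- `embSoL` as a linear map: the inclusion `⋀²ℝⁿ → ⋀²ℝ^{n+k}`. -/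
def embSoLHom (n k : ℕ) : so n →ₗ[ℝ] so (n + k) where
  toFun := embSoL
  map_add' := embSoL_add
  map_smul' := embSoL_smul

/-- `resSo` as a linear map: the orthogonal projection `⋀²ℝ^{n+k} → ⋀²ℝⁿ`, adjoint to
`embSoLHom`. -/
def resSoHom (n k : ℕ) : so (n + k) →ₗ[ℝ] so n where
  toFun := resSo
  map_add' := resSo_add
  map_smul' := resSo_smul

lemma extEnd_eq_comp (S : Module.End ℝ (so n)) :
    (extEnd S : Module.End ℝ (so (n + k))) = embSoLHom n k ∘ₗ S ∘ₗ resSoHom n k := rfl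

lemma resSoHom_apply (M : so (n + k)) (i j : Fin n) :
    (resSoHom n k M).1 i j = M.1 (Fin.castAdd k i) (Fin.castAdd k j) := rfl

lemma embSoLHom_apply_castAdd (X : so n) (i j : Fin n) :
    (embSoLHom n k X).1 (Fin.castAdd k i) (Fin.castAdd k j) = X.1 i j := by
  simp [embSoLHom, embSoL]

lemma embSoLHom_apply_natAdd_left (X : so n) (i : Fin k) (j : Fin (n + k)) :
    (embSoLHom n k X).1 (Fin.natAdd n i) j = 0 := by
  simp [embSoLHom, embSoL]

lemma embSoLHom_apply_natAdd_right (X : so n) (i : Fin (n + k)) (j : Fin k) :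
    (embSoLHom n k X).1 i (Fin.natAdd n j) = 0 := by
  simp [embSoLHom, embSoL]

lemma resSoHom_embSoLHom (X : so n) : resSoHom n k (embSoLHom n k X) = X := by
  ext i j
  rw [resSoHom_apply, embSoLHom_apply_castAdd]

lemma ip_embSoLHom (X : so n) (Y : so (n + k)) :
    ip (embSoLHom n k X) Y = ip X (resSoHom n k Y) := by
  simp only [ip, trace, diag_apply, Matrix.mul_apply, Fin.sum_univ_add, embSoLHom_apply_castAdd,
    embSoLHom_apply_natAdd_left, embSoLHom_apply_natAdd_right, resSoHom_apply, zero_mul,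
    Finset.sum_const_zero, add_zero]

lemma brkt_embSoLHom (X Y : so n) :
    brkt (embSoLHom n k X) (embSoLHom n k Y) = embSoLHom n k (brkt X Y) := by
  ext a b
  simp only [brkt, Matrix.sub_apply, Matrix.mul_apply, Fin.sum_univ_add,
    embSoLHom_apply_natAdd_left, mul_zero, Finset.sum_const_zero, add_zero]
  refine Fin.addCases (fun i => ?_) (fun i => ?_) a <;>
    refine Fin.addCases (fun j => ?_) (fun j => ?_) b <;>
    simp only [embSoLHom_apply_castAdd, embSoLHom_apply_natAdd_left,
      embSoLHom_apply_natAdd_right, Matrix.sub_apply, Matrix.mul_apply, zero_mul, mul_zero,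
      Finset.sum_const_zero, sub_zero]

lemma resSoHom_brkt_embSoLHom (ψ : so (n + k)) (X : so n) :
    resSoHom n k (brkt ψ (embSoLHom n k X)) = brkt (resSoHom n k ψ) X := by
  refine ip_ext fun Z => ?_
  rw [ip_comm, ← ip_embSoLHom, ← ip_brkt, brkt_embSoLHom, ip_embSoLHom, ip_brkt, ip_comm]

lemma sum_ip_adjoint {m : ℕ} {J : so n →ₗ[ℝ] so k} {J' : so k →ₗ[ℝ] so n}
    (hJ : ∀ X Y, ip (J X) Y = ip X (J' Y)) (F : so k →ₗ[ℝ] so m) (G : so n →ₗ[ℝ] so m) :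
    ∑ q ∈ pairs k, ip (F (omegaB q)) (G (J' (omegaB q))) =
      ∑ p ∈ pairs n, ip (F (J (omegaB p))) (G (omegaB p)) := by
  calc ∑ q ∈ pairs k, ip (F (omegaB q)) (G (J' (omegaB q)))
      = ∑ q ∈ pairs k, ∑ p ∈ pairs n,
          ip (J (omegaB p)) (omegaB q) * ip (F (omegaB q)) (G (omegaB p)) := by
        refine Finset.sum_congr rfl fun q _ => ?_
        conv_lhs => rw [← sum_ip_smul_omegaB (J' (omegaB q))]
        simp only [map_sum, map_smul, ← ipL_apply (F _), smul_eq_mul, hJ, ip_comm (J' _)]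
    _ = ∑ p ∈ pairs n, ip (F (J (omegaB p))) (G (omegaB p)) := by
        rw [Finset.sum_comm]
        refine Finset.sum_congr rfl fun p _ => ?_
        conv_rhs => rw [← sum_ip_smul_omegaB (J (omegaB p))]
        simp only [map_sum, map_smul, ip_sum_left, ip_smul_left]

lemma extEnd_add (S T : Module.End ℝ (so n)) :
    (extEnd (S + T) : Module.End ℝ (so (n + k))) = extEnd S + extEnd T := by
  simp only [extEnd_eq_comp, LinearMap.add_comp, LinearMap.comp_add]

lemma extEnd_smul (c : ℝ) (S : Module.End ℝ (so n)) :
    (extEnd (c • S) : Module.End ℝ (so (n + k))) = c • extEnd S := by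
  simp only [extEnd_eq_comp, LinearMap.smul_comp, LinearMap.comp_smul]

lemma extEnd_mul (S T : Module.End ℝ (so n)) :
    (extEnd (S * T) : Module.End ℝ (so (n + k))) = extEnd S * extEnd T := by
  ext1 φ
  simp only [extEnd_eq_comp, Module.End.mul_apply, LinearMap.comp_apply, resSoHom_embSoLHom]

lemma sharp_extEnd (S T : Module.End ℝ (so n)) :
    sharp (extEnd S) (extEnd T) = (extEnd (sharp S T) : Module.End ℝ (so (n + k))) := by
  ext1 φ
  refine ip_ext fun ψ => ?_
  have h_ip (P : Fin (n + k) × Fin (n + k)) :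
      ip (extEnd T (brktL ψ (omegaB P))) (brktL φ (extEnd S (omegaB P))) =
        ip ((T ∘ₗ resSoHom n k ∘ₗ brktL ψ) (omegaB P))
          ((brktL (resSoHom n k φ) ∘ₗ S) (resSoHom n k (omegaB P))) := by
    simp only [extEnd_eq_comp, LinearMap.comp_apply, ip_embSoLHom, brktL_apply,
      resSoHom_brkt_embSoLHom]
  rw [ip_sharp]
  simp only [h_ip]
  rw [sum_ip_adjoint ip_embSoLHom]
  simp only [LinearMap.comp_apply, brktL_apply, resSoHom_brkt_embSoLHom, extEnd_eq_comp,
    ip_embSoLHom, ip_sharp]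

lemma Qop_extEnd (S : Module.End ℝ (so n)) :
    Qop (extEnd S) = (extEnd (Qop S) : Module.End ℝ (so (n + k))) := by
  rw [Qop, Qop, sharp_extEnd, extEnd_add, extEnd_mul]

lemma trace_extEnd (S : Module.End ℝ (so n)) :
    LinearMap.trace ℝ (so (n + k)) (extEnd S) = LinearMap.trace ℝ (so n) S := by
  rw [extEnd_eq_comp, LinearMap.trace_comp_comm']
  congr 1
  ext1 X
  simp only [LinearMap.comp_apply, resSoHom_embSoLHom]

lemma endNorm_extEnd (S : Module.End ℝ (so n)) :
    endNorm (extEnd S : Module.End ℝ (so (n + k))) = endNorm S := by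
  rw [endNorm, endNorm, endIP, endIP, ← extEnd_mul, trace_extEnd]

/-! ### The curve -/

lemma curveE_eq_extEnd (A B : Module.End ℝ (so n)) (lam a t : ℝ) :
    (curveE A B lam a t : Module.End ℝ (so (n + k))) =
      extEnd ((a / (1 - lam * a * t)) • A + (1 / (1 - lam * t)) • B) := by
  rw [curveE, extEnd_add, extEnd_smul, extEnd_smul]

lemma curveE_eq_smul (A B : Module.End ℝ (so n)) {lam a t : ℝ} (ht : 1 - lam * t ≠ 0) :
    (curveE A B lam a t : Module.End ℝ (so (n + k))) = (1 / (1 - lam * t)) •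
      ((a * (1 - lam * t) / (1 - lam * a * t)) • extEnd A + extEnd B) := by
  have h_coeff : 1 / (1 - lam * t) * (a * (1 - lam * t) / (1 - lam * a * t)) =
      a / (1 - lam * a * t) := by
    field_simp
  rw [curveE, smul_add, smul_smul, h_coeff]

lemma hasDerivAt_div_one_sub {lam a t : ℝ} (h : 1 - lam * a * t ≠ 0) :
    HasDerivAt (fun s => a / (1 - lam * a * s)) (lam * (a / (1 - lam * a * t)) ^ 2) t := by
  have h_denom : HasDerivAt (fun s => 1 - lam * a * s) (-(lam * a)) t := by
    simpa using ((hasDerivAt_id t).const_mul (lam * a)).const_sub 1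
  refine ((hasDerivAt_const t a).div h_denom h).congr_deriv ?_
  rw [div_pow, zero_mul, zero_sub, mul_neg, neg_neg]
  ring

lemma hasDerivAt_curveE {A B : Module.End ℝ (so n)} {lam a t : ℝ}
    (hQ : ∀ x y : ℝ, Qop (x • A + y • B) = (lam * x ^ 2) • A + (lam * y ^ 2) • B)
    (h_A : 1 - lam * a * t ≠ 0) (h_B : 1 - lam * t ≠ 0)
    (ℓ : Module.End ℝ (so (n + k)) →ₗ[ℝ] ℝ) :
    HasDerivAt (fun s => ℓ (curveE A B lam a s)) (ℓ (Qop (curveE A B lam a t))) t := by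
  have h_deriv_A := hasDerivAt_div_one_sub h_A
  have h_deriv_B := hasDerivAt_div_one_sub (lam := lam) (a := 1) (t := t) (by rwa [mul_one])
  rw [curveE_eq_extEnd, Qop_extEnd, hQ]
  simp only [curveE, extEnd_add, extEnd_smul, map_add, map_smul, smul_eq_mul]
  simp only [mul_one] at h_deriv_B
  exact (h_deriv_A.mul_const _).add (h_deriv_B.mul_const _)

lemma tendsto_inv_endNorm_mul_curveE (A : Module.End ℝ (so n)) {B : Module.End ℝ (so n)}
    (hB : endNorm B ≠ 0) {lam a : ℝ} (hlam : 0 < lam) (ha : a ≠ 1)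
    (ℓ : Module.End ℝ (so (n + k)) →ₗ[ℝ] ℝ) :
    Tendsto (fun t => (endNorm (curveE (k := k) A B lam a t))⁻¹ * ℓ (curveE A B lam a t))
      (nhdsWithin (1 / lam) (Set.Iio (1 / lam)))
      (nhds ((endNorm B)⁻¹ * ℓ (extEnd B))) := by
  let u (t : ℝ) : ℝ := a * (1 - lam * t) / (1 - lam * a * t)
  let f (x : ℝ) : ℝ := (endNorm (x • extEnd (k := k) A + extEnd B))⁻¹ * ℓ (x • extEnd A + extEnd B)
  have h_blowup : u (1 / lam) = 0 := by
    simp [u, hlam.ne']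
  have hu : ContinuousAt u (1 / lam) := by
    refine ContinuousAt.div (by fun_prop) (by fun_prop) ?_
    rw [mul_right_comm, mul_one_div_cancel hlam.ne', one_mul]
    exact sub_ne_zero.mpr ha.symm
  have hf : ContinuousAt f 0 := by
    refine ContinuousAt.mul ((continuous_endNorm_smul_add _ _).continuousAt.inv₀ ?_) ?_
    · rwa [zero_smul, zero_add, endNorm_extEnd]
    · simp only [map_add, map_smul, smul_eq_mul]
      fun_prop
  have h_limit : f 0 = (endNorm B)⁻¹ * ℓ (extEnd B) := by
    simp only [f, zero_smul, zero_add, endNorm_extEnd]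
  have h_eq : ∀ t < 1 / lam,
      f (u t) = (endNorm (curveE (k := k) A B lam a t))⁻¹ * ℓ (curveE A B lam a t) := by
    intro t ht
    have h_pos : 0 < 1 - lam * t := by
      rw [lt_div_iff₀' hlam] at ht
      linarith
    rw [curveE_eq_smul A B h_pos.ne', inv_endNorm_mul_smul (one_div_pos.mpr h_pos)]
  rw [← h_limit, ← h_blowup]
  rw [← h_blowup] at hf
  refine ((hf.comp hu).tendsto.mono_left nhdsWithin_le_nhds).congr' ?_
  filter_upwards [self_mem_nhdsWithin] with t ht using h_eq t ht

/-! ### Instability -/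

/-- The matrix entry `(i, j)` of `A φ` as a linear functional of `A`: a coordinate on the space of
operators. -/
def entryL (φ : so n) (i j : Fin n) : Module.End ℝ (so n) →ₗ[ℝ] ℝ where
  toFun A := (A φ).1 i j
  map_add' _ _ := rfl
  map_smul' _ _ := rfl

theorem stmt4_general (n k : ℕ) (Rh : Module.End ℝ (so n)) (hACO : IsACO Rh)
    (hEin : IsEinstein Rh) (hnotI : ¬ ∃ c : ℝ, Rh = c • (1 : Module.End ℝ (so n)))
    (lam : ℝ) (hlam : 0 < lam) (hQ : Qop Rh = lam • Rh) (a : ℝ) (ha : a < 1) :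
    (∀ t ∈ Set.Ico (0 : ℝ) (1 / lam), ∀ ℓ : Module.End ℝ (so (n + k)) →ₗ[ℝ] ℝ,
      HasDerivAt (fun s => ℓ (curveE (compI Rh) (compW Rh) lam a s))
        (ℓ (Qop (curveE (compI Rh) (compW Rh) lam a t))) t) ∧
    (curveE (compI Rh) (compW Rh) lam a 0 : Module.End ℝ (so (n + k))) =
      extEnd (a • compI Rh + compW Rh) ∧
    ∀ ℓ : Module.End ℝ (so (n + k)) →ₗ[ℝ] ℝ,
      Tendsto (fun t => (endNorm (curveE (k := k) (compI Rh) (compW Rh) lam a t))⁻¹ *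
          ℓ (curveE (compI Rh) (compW Rh) lam a t))
        (nhdsWithin (1 / lam) (Set.Iio (1 / lam)))
        (nhds ((endNorm (compW Rh))⁻¹ * ℓ (extEnd (compW Rh)))) := by
  obtain ⟨h_self_adjoint, h_bianchi⟩ := hACO
  refine ⟨fun t ⟨h_nonneg, h_lt⟩ ℓ => ?_, ?_, fun ℓ => ?_⟩
  · rw [lt_div_iff₀' hlam] at h_lt
    have h_B : 0 < 1 - lam * t := by linarith
    have h_A : 0 < 1 - lam * a * t := by nlinarith [mul_nonneg hlam.le h_nonneg]
    exact hasDerivAt_curveE (Qop_smul_compI_add_smul_compW h_bianchi hEin hQ) h_A.ne' h_B.ne' ℓ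
  · simp [curveE_eq_extEnd]
  · have h_ne : compW Rh ≠ 0 := fun h_zero => hnotI ⟨_, by
      rw [← hEin.compI_add_compW, h_zero, add_zero, compI]⟩
    exact tendsto_inv_endNorm_mul_curveE _ (endNorm_pos (h_self_adjoint.compW hEin) h_ne).ne'
      hlam ha.ne ℓ

end

/-- Let `n, k ≥ 1` and let `R̂ ∈ S²_B(⋀²ℝⁿ)` be Einstein with
`s(R̂) > 0`, not a multiple of `id ∧ id`, with `Q(R̂) = λR̂`, `λ > 0`.  Let
`E : S²_B(⋀²ℝⁿ) → S²_B(⋀²ℝ^{n+k})` be extension by zero as a product curvature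
operator.  Then for every `α₀ ∈ (0,1)` the curve
`R(t) = (α₀/(1-λα₀t)) E(R̂_I) + (1/(1-λt)) E(R̂_W)` on `[0,1/λ)` solves
`dR/dt = Q(R(t))` (componentwise) with `R(0) = E(α₀R̂_I + R̂_W)`, and `R(t)/‖R(t)‖`
converges to `E(R̂_W)/‖R̂_W‖` as `t → 1/λ`: the ODE `dR/dt = Q(R)` behaves unstably
near the product curvature operator `E(R̂)`. -/
theorem stmt4 (n k : ℕ) (hn : 1 ≤ n) (hk : 1 ≤ k)
    (Rh : Module.End ℝ (so n))
    (hACO : IsACO Rh) (hEin : IsEinstein Rh) (hs : 0 < scal Rh)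
    (hnotI : ¬ ∃ c : ℝ, Rh = c • (1 : Module.End ℝ (so n)))
    (lam : ℝ) (hlam : 0 < lam) (hQ : Qop Rh = lam • Rh) :
    ∀ a ∈ Set.Ioo (0 : ℝ) 1,
      (∀ t ∈ Set.Ico (0 : ℝ) (1 / lam), ∀ (φ : so (n + k)) (i j : Fin (n + k)),
        HasDerivAt (fun s => ((curveE (k := k) (compI Rh) (compW Rh) lam a s : Module.End ℝ (so (n + k))) φ).1 i j)
          (((Qop (curveE (k := k) (compI Rh) (compW Rh) lam a t)) φ).1 i j) t) ∧
      curveE (k := k) (compI Rh) (compW Rh) lam a 0 = extEnd (k := k) (a • compI Rh + compW Rh) ∧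
      (∀ (φ : so (n + k)) (i j : Fin (n + k)),
        Filter.Tendsto
          (fun t => (endNorm (curveE (k := k) (compI Rh) (compW Rh) lam a t))⁻¹ *
            ((curveE (k := k) (compI Rh) (compW Rh) lam a t) φ).1 i j)
          (nhdsWithin (1 / lam) (Set.Iio (1 / lam)))
          (nhds ((endNorm (compW Rh))⁻¹ * ((extEnd (compW Rh) : Module.End ℝ (so (n + k))) φ).1 i j))) := by
  intro a ⟨_, ha⟩
  obtain ⟨h_ode, h_init, h_lim⟩ := stmt4_general n k Rh hACO hEin hnotI lam hlam hQ a ha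
  exact ⟨fun t ht φ i j => h_ode t ht (entryL φ i j), h_init, fun φ i j => h_lim (entryL φ i j)⟩

end
end

section
/- For integers n ≥ 2 and k ≥ 1, the point (x, z) = (1, 1) is the unique solution with x > 0 and z > 0 of the system k − x − (k−1)xz = 0, n − z − (n−1)xz = 0. Moreover, the Jacobian at (1,1) of the planar vector field (x, z) ↦ (k − x − (k−1)xz, n − z − (n−1)xz) is the matrix [[−k, −(k−1)], [−(n−1), −n]], which has trace −(n+k) < 0 and determinant n + k − 1 > 0, so both of its eigenvalues have negative real part. -/
/-!
If `(x, z)` is an equilibrium, then `(xz - 1)((n - 1)x + k) = 0` and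
`(xz - 1)((k - 1)z + n) = 0`. The case `xz = 1` forces `x = z = 1`, while `(n - 1)x = -k` is
impossible for `n ≥ 1`, `k > 0` and `x ≥ 0`.

An eigenvalue `μ` of a real `2 × 2` matrix is a root of `X² - tX + d`, where `t` is the trace and
`d` the determinant. Comparing imaginary parts, either `2 Re μ = t < 0`, or `μ` is real, and then
`μ ≥ 0` would give `0 < μ² - tμ + d`.
-/

noncomputable section

/-- The continuous linear map `ℝ × ℝ → ℝ × ℝ` with matrix `[[a, b], [c, d]]`. -/
def matCLM (a b c d : ℝ) : ℝ × ℝ →L[ℝ] ℝ × ℝ :=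
  LinearMap.toContinuousLinearMap
    { toFun := fun p => (a * p.1 + b * p.2, c * p.1 + d * p.2)
      map_add' := by
        intro p q
        simp only [Prod.fst_add, Prod.snd_add, Prod.mk_add_mk, Prod.mk.injEq]
        constructor <;> ring
      map_smul' := by
        intro r p
        simp only [Prod.smul_fst, Prod.smul_snd, smul_eq_mul, RingHom.id_apply,
          Prod.smul_mk, Prod.mk.injEq]
        constructor <;> ring }

section Equilibria

/-- The planar vector field `(x, z) ↦ (k - x - (k-1)xz, n - z - (n-1)xz)`, the normalization
`y = 1` of the curvature ODE `dR/dt = R² + R # R` restricted to curvature operators modeled on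
`Sⁿ × ℝᵏ`. -/
def curvatureField {R : Type*} [CommRing R] (n k : R) (p : R × R) : R × R :=
  (k - p.1 - (k - 1) * p.1 * p.2, n - p.2 - (n - 1) * p.1 * p.2)

theorem curvatureField_eq_zero_iff {R : Type*} [CommRing R] [NoZeroDivisors R] {n k x z : R} :
    curvatureField n k (x, z) = 0 ↔
      (x = 1 ∧ z = 1) ∨ ((n - 1) * x = -k ∧ (k - 1) * z = -n) := by
  simp only [curvatureField, Prod.mk_eq_zero]
  constructor
  · rintro ⟨h₁, h₂⟩
    have hx : (x * z - 1) * ((n - 1) * x + k) = 0 := by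
      linear_combination -h₁ - x * h₂
    have hz : (x * z - 1) * ((k - 1) * z + n) = 0 := by
      linear_combination -z * h₁ - h₂
    by_cases hxz : x * z - 1 = 0
    · left
      exact ⟨by linear_combination -h₁ - (k - 1) * hxz, by linear_combination -h₂ - (n - 1) * hxz⟩
    · right
      exact ⟨eq_neg_of_add_eq_zero_left ((mul_eq_zero.mp hx).resolve_left hxz),
        eq_neg_of_add_eq_zero_left ((mul_eq_zero.mp hz).resolve_left hxz)⟩
  · rintro (⟨rfl, rfl⟩ | ⟨hx, hz⟩)
    · constructor <;> ring
    · exact ⟨by linear_combination hx - x * hz, by linear_combination hz - z * hx⟩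

theorem eq_one_of_curvatureField_eq_zero {R : Type*} [CommRing R] [LinearOrder R]
    [IsStrictOrderedRing R] {n k x z : R} (hn : 1 ≤ n) (hk : 0 < k) (hx : 0 ≤ x)
    (h : curvatureField n k (x, z) = 0) : x = 1 ∧ z = 1 := by
  refine (curvatureField_eq_zero_iff.mp h).resolve_right fun ⟨hnx, _⟩ => ?_
  have neg_k_nonneg : 0 ≤ -k := hnx ▸ mul_nonneg (sub_nonneg.mpr hn) hx
  exact hk.not_ge (neg_nonneg.mp neg_k_nonneg)

end Equilibria

section Linearization

theorem hasFDerivAt_curvatureField (n k : ℝ) (p : ℝ × ℝ) :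
    HasFDerivAt (curvatureField n k)
      (matCLM (-1 - (k - 1) * p.2) (-((k - 1) * p.1)) (-((n - 1) * p.2)) (-1 - (n - 1) * p.1))
      p := by
  have hfst : HasFDerivAt Prod.fst (ContinuousLinearMap.fst ℝ ℝ ℝ) p := hasFDerivAt_fst
  have hsnd : HasFDerivAt Prod.snd (ContinuousLinearMap.snd ℝ ℝ ℝ) p := hasFDerivAt_snd
  have hx := (hfst.const_sub k).sub ((hfst.const_mul (k - 1)).mul hsnd)
  have hz := (hsnd.const_sub n).sub ((hfst.const_mul (n - 1)).mul hsnd)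
  refine (hx.prodMk hz).congr_fderiv (ContinuousLinearMap.ext fun q => ?_)
  ext <;> simp [matCLM] <;> ring

/-- The Jacobian matrix of `curvatureField n k` at the equilibrium `(1, 1)`. -/
def curvatureJacobian {R : Type*} [CommRing R] (n k : R) : Matrix (Fin 2) (Fin 2) R :=
  !![-k, -(k - 1); -(n - 1), -n]

theorem trace_curvatureJacobian {R : Type*} [CommRing R] (n k : R) :
    (curvatureJacobian n k).trace = -(n + k) := by
  rw [curvatureJacobian, Matrix.trace_fin_two_of]
  ring

theorem det_curvatureJacobian {R : Type*} [CommRing R] (n k : R) :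
    (curvatureJacobian n k).det = n + k - 1 := by
  rw [curvatureJacobian, Matrix.det_fin_two_of]
  ring

end Linearization

section Stability

theorem re_neg_of_sq_sub_mul_add_eq_zero {t d : ℝ} {μ : ℂ} (ht : t < 0) (hd : 0 < d)
    (h : μ ^ 2 - t * μ + d = 0) : μ.re < 0 := by
  have hre : μ.re ^ 2 - μ.im ^ 2 - t * μ.re + d = 0 := by
    simpa [pow_two] using congrArg Complex.re h
  have him : μ.im * (2 * μ.re - t) = 0 := by
    have him_expanded : μ.re * μ.im + μ.im * μ.re - t * μ.im = 0 := by
      simpa [pow_two] using congrArg Complex.im h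
    linear_combination him_expanded
  rcases mul_eq_zero.mp him with him_zero | hre_eq
  · by_contra! hre_nonneg
    rw [him_zero] at hre
    nlinarith [mul_nonneg (neg_nonneg.mpr ht.le) hre_nonneg]
  · linarith

theorem isRoot_charpoly_of_mulVec_eq_smul {R ι : Type*} [CommRing R] [IsDomain R] [Fintype ι]
    [DecidableEq ι] {M : Matrix ι ι R} {μ : R} {v : ι → R} (hv : v ≠ 0)
    (h : M.mulVec v = μ • v) : M.charpoly.IsRoot μ := by
  rw [Polynomial.IsRoot, Matrix.eval_charpoly]
  exact Matrix.exists_mulVec_eq_zero_iff.mp ⟨v, hv, by simp [Matrix.sub_mulVec, h]⟩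

theorem re_neg_of_trace_neg_of_det_pos {ι : Type*} [Fintype ι] [DecidableEq ι]
    (hι : Fintype.card ι = 2) {M : Matrix ι ι ℝ} (htrace : M.trace < 0) (hdet : 0 < M.det)
    {μ : ℂ} {v : ι → ℂ} (hv : v ≠ 0)
    (h : (M.map (fun r : ℝ => (r : ℂ))).mulVec v = μ • v) : μ.re < 0 := by
  have hroot : (M.charpoly.map Complex.ofRealHom).IsRoot μ := by
    rw [← Matrix.charpoly_map]
    exact isRoot_charpoly_of_mulVec_eq_smul hv h
  refine re_neg_of_sq_sub_mul_add_eq_zero htrace hdet ?_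
  simpa [M.charpoly_of_card_eq_two hι] using hroot

end Stability

theorem stmt8_general {n k : ℝ} (hn : 1 ≤ n) (hk : 0 < k) :
    curvatureField n k (1, 1) = 0 ∧
    (∀ x z : ℝ, 0 ≤ x → curvatureField n k (x, z) = 0 → x = 1 ∧ z = 1) ∧
    HasFDerivAt (curvatureField n k) (matCLM (-k) (-(k - 1)) (-(n - 1)) (-n)) (1, 1) ∧
    (curvatureJacobian n k).trace = -(n + k) ∧
    (curvatureJacobian n k).trace < 0 ∧
    (curvatureJacobian n k).det = n + k - 1 ∧
    0 < (curvatureJacobian n k).det ∧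
    (∀ (μ : ℂ) (v : Fin 2 → ℂ), v ≠ 0 →
      ((curvatureJacobian n k).map (fun r : ℝ => (r : ℂ))).mulVec v = μ • v → μ.re < 0) := by
  have htrace : (curvatureJacobian n k).trace < 0 := by
    rw [trace_curvatureJacobian]
    linarith
  have hdet : 0 < (curvatureJacobian n k).det := by
    rw [det_curvatureJacobian]
    linarith
  refine ⟨curvatureField_eq_zero_iff.mpr (.inl ⟨rfl, rfl⟩),
    fun x z hx => eq_one_of_curvatureField_eq_zero hn hk hx, ?_,
    trace_curvatureJacobian n k, htrace, det_curvatureJacobian n k, hdet,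
    fun μ v => re_neg_of_trace_neg_of_det_pos (Fintype.card_fin 2) htrace hdet⟩
  convert hasFDerivAt_curvatureField n k (1, 1) using 2 <;> ring

/-- For `n ≥ 2`, `k ≥ 1`: `(1,1)` is the unique solution with `x, z > 0` of
`k - x - (k-1)xz = 0`, `n - z - (n-1)xz = 0`; the Jacobian at `(1,1)` of the planar
field `(x,z) ↦ (k - x - (k-1)xz, n - z - (n-1)xz)` is `[[-k, -(k-1)], [-(n-1), -n]]`,
which has trace `-(n+k) < 0`, determinant `n+k-1 > 0`, and all (complex) eigenvalues
with negative real part. -/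
theorem stmt8 (n k : ℕ) (hn : 2 ≤ n) (hk : 1 ≤ k) :
    ((k : ℝ) - 1 - ((k : ℝ) - 1) * 1 * 1 = 0 ∧ (n : ℝ) - 1 - ((n : ℝ) - 1) * 1 * 1 = 0) ∧
    (∀ x z : ℝ, 0 < x → 0 < z →
      (k : ℝ) - x - ((k : ℝ) - 1) * x * z = 0 →
      (n : ℝ) - z - ((n : ℝ) - 1) * x * z = 0 → x = 1 ∧ z = 1) ∧
    HasFDerivAt
      (fun p : ℝ × ℝ =>
        ((k : ℝ) - p.1 - ((k : ℝ) - 1) * p.1 * p.2,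
         (n : ℝ) - p.2 - ((n : ℝ) - 1) * p.1 * p.2))
      (matCLM (-(k : ℝ)) (-((k : ℝ) - 1)) (-((n : ℝ) - 1)) (-(n : ℝ))) (1, 1) ∧
    (!![-(k : ℝ), -((k : ℝ) - 1); -((n : ℝ) - 1), -(n : ℝ)]).trace = -((n : ℝ) + (k : ℝ)) ∧
    (!![-(k : ℝ), -((k : ℝ) - 1); -((n : ℝ) - 1), -(n : ℝ)]).trace < 0 ∧
    (!![-(k : ℝ), -((k : ℝ) - 1); -((n : ℝ) - 1), -(n : ℝ)]).det = (n : ℝ) + (k : ℝ) - 1 ∧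
    0 < (!![-(k : ℝ), -((k : ℝ) - 1); -((n : ℝ) - 1), -(n : ℝ)]).det ∧
    (∀ (μ : ℂ) (v : Fin 2 → ℂ), v ≠ 0 →
      ((!![-(k : ℝ), -((k : ℝ) - 1); -((n : ℝ) - 1), -(n : ℝ)]).map
          (fun r : ℝ => (r : ℂ))).mulVec v = μ • v → μ.re < 0) := by
  obtain ⟨hzero, huniq, hlin⟩ := stmt8_general (n := n) (k := k) (mod_cast by lia) (mod_cast hk)
  exact ⟨Prod.ext_iff.mp hzero, fun x z hx _ h₁ h₂ => huniq x z hx.le (Prod.ext h₁ h₂), hlin⟩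

end
end
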